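/- Let R = (R_n : n ∈ ℕ) be a computable sequence of subsets of ℕ that admits no computable R-cohesive set. Then for every 3-generic G ∈ 2^ℕ and every set C ⊆ ℕ with C ≤_T G, the set C is not R-cohesive. -/

import Mathlib

open MeasureTheory

/-- Finite binary strings. -/
abbrev BinStr := List Bool

/-- `σ` is a (finite) initial segment of `X ∈ 2^ℕ`. -/
def IsInitSeg (σ : BinStr) (X : ℕ → Bool) : Prop :=
  ∀ i, i < σ.length → σ.getD i false = X i

/-- `A ⊆* B` : all but finitely many elements of `A` are in `B`. -/
def SubsetStar (A B : Set ℕ) : Prop := (A \ B).Finite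

/-- `C` is cohesive for the sequence `R`. -/
def Cohesive (R : ℕ → Set ℕ) (C : Set ℕ) : Prop :=
  C.Infinite ∧ ∀ n, SubsetStar C (R n) ∨ SubsetStar C (R n)ᶜ

/-- A set of naturals is computable if its characteristic function is computable. -/
def ComputableSet (A : Set ℕ) : Prop :=
  ∃ f : ℕ → Bool, Computable f ∧ ∀ n, n ∈ A ↔ f n = true

/-- A sequence of sets is computable if `{(n,x) : x ∈ R n}` is computable. -/
def ComputableSeq (R : ℕ → Set ℕ) : Prop :=
  ∃ f : ℕ → ℕ → Bool, Computable₂ f ∧ ∀ n x, x ∈ R n ↔ f n x = true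

/-- A use-monotone Turing functional: a partial computable map from
(strings × ℕ) to ℕ whose domain is monotone along extension of strings. -/
structure TuringFunctional where
  Φ : BinStr × ℕ →. ℕ
  partrec : Partrec Φ
  mono : ∀ ⦃σ τ : BinStr⦄, σ <+: τ → ∀ x, (Φ (σ, x)).Dom → (Φ (τ, x)).Dom

/-- `dom Φ(σ)` for a finite string `σ`. -/
def TuringFunctional.domStr (F : TuringFunctional) (σ : BinStr) : Set ℕ :=
  {x | (F.Φ (σ, x)).Dom}

/-- `dom Φ(X)` for `X ∈ 2^ℕ`: the union of `dom Φ(σ)` over initial segments `σ` of `X`. -/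
def TuringFunctional.domF (F : TuringFunctional) (X : ℕ → Bool) : Set ℕ :=
  {x | ∃ σ, IsInitSeg σ X ∧ (F.Φ (σ, x)).Dom}

/-- `C ≤_T X` via a monotone partial computable functional with Boolean values. -/
def ReducibleToFun (C : Set ℕ) (X : ℕ → Bool) : Prop :=
  ∃ Ψ : BinStr × ℕ →. Bool,
    Partrec Ψ ∧
    (∀ ⦃σ τ : BinStr⦄, σ <+: τ → ∀ x b, b ∈ Ψ (σ, x) → b ∈ Ψ (τ, x)) ∧
    (∀ x, ∃ σ, IsInitSeg σ X ∧ (Ψ (σ, x)).Dom) ∧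
    (∀ σ x b, IsInitSeg σ X → b ∈ Ψ (σ, x) → (b = true ↔ x ∈ C))

/-- `S` is a `Σ⁰₃` set of binary strings. -/
def Sigma3 (S : Set BinStr) : Prop :=
  ∃ P : BinStr → ℕ → ℕ → ℕ → Bool,
    (Computable fun q : BinStr × ℕ × ℕ × ℕ => P q.1 q.2.1 q.2.2.1 q.2.2.2) ∧
    ∀ σ, σ ∈ S ↔ ∃ a, ∀ b, ∃ c, P σ a b c = true

/-- `G ∈ 2^ℕ` is `3`-generic: it meets or strongly avoids every `Σ⁰₃` set of strings. -/
def ThreeGeneric (G : ℕ → Bool) : Prop :=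
  ∀ S : Set BinStr, Sigma3 S →
    (∃ σ, IsInitSeg σ G ∧ σ ∈ S) ∨ (∃ σ, IsInitSeg σ G ∧ ∀ τ, σ <+: τ → τ ∉ S)

/-- Binary trees: sets of strings closed under initial segments. -/
def IsTree (T : Set BinStr) : Prop := ∀ σ ∈ T, ∀ τ, τ <+: σ → τ ∈ T

/-- `[T]`, the set of infinite paths through `T`. -/
def paths (T : Set BinStr) : Set (ℕ → Bool) := {X | ∀ σ, IsInitSeg σ X → σ ∈ T}

/-- A computable set of binary strings. -/
def ComputableStrSet (T : Set BinStr) : Prop :=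
  ∃ f : BinStr → Bool, Computable f ∧ ∀ σ, σ ∈ T ↔ f σ = true

/-- The fair-coin (uniform) product measure on Cantor space `ℕ → Bool`, realized as
the pushforward of Lebesgue measure on `[0,1)` under the binary-digit map. -/
noncomputable def fairCoin : Measure (ℕ → Bool) :=
  Measure.map (fun x : ℝ => fun n : ℕ => decide (⌊x * 2 ^ (n + 1)⌋ % 2 = 1))
    (volume.restrict (Set.Ico (0 : ℝ) 1))

/-- The basic clopen set `[σ]` of all `X ∈ 2^ℕ` extending `σ`. -/
def cyl (σ : BinStr) : Set (ℕ → Bool) := {X | IsInitSeg σ X}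

/-- A computably enumerable set of pairs `(n, σ)`. -/
def CEStrSet (W : Set (ℕ × BinStr)) : Prop :=
  ∃ f : ℕ × BinStr →. Unit, Partrec f ∧ ∀ p, p ∈ W ↔ (f p).Dom

/-- `X` is Martin-Löf random: it passes every Martin-Löf test. -/
def MLRandom (X : ℕ → Bool) : Prop :=
  ∀ W : Set (ℕ × BinStr), CEStrSet W →
    (∀ n : ℕ, fairCoin (⋃ σ ∈ {σ | (n, σ) ∈ W}, cyl σ) ≤ 1 / 2 ^ n) →
    X ∉ ⋂ n : ℕ, ⋃ σ ∈ {σ | (n, σ) ∈ W}, cyl σ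

/-- A uniformly computable enumeration of binary trees containing every computable
binary tree. -/
def TreeEnum (T : ℕ → Set BinStr) : Prop :=
  (∃ f : ℕ → BinStr → Bool, Computable₂ f ∧ ∀ e σ, σ ∈ T e ↔ f e σ = true) ∧
  (∀ e, IsTree (T e)) ∧
  (∀ S, IsTree S → ComputableStrSet S → ∃ e, T e = S)

/-- The set `D_{e,0}` of strings forcing `dom Φ(G)` to be bounded. -/
def D0 (F : TuringFunctional) : Set BinStr :=
  {τ | ∃ x : ℕ, ∀ ρ, τ <+: ρ → (F.domStr ρ).encard < (x : ℕ∞)}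

/-- The set `D_{e,1,n}` of strings forcing `dom Φ(G)` to be split by `R n`. -/
def D1 (R : ℕ → Set ℕ) (F : TuringFunctional) (n : ℕ) : Set BinStr :=
  {τ | ∀ ρ, τ <+: ρ → ∀ x : ℕ, ∃ ζ, ρ <+: ζ ∧ ∃ u v, x < u ∧ x < v ∧
    u ∈ F.domStr ζ ∧ v ∈ F.domStr ζ ∧ (u ∈ R n ↔ v ∉ R n)}

/-!
Let `C` be cohesive and enumerated from the `3`-generic `G` by a c.e. set of axioms. For some
initial segment `σ` of `G`, genericity for `Σ⁰₃` sets of strings gives two density facts: every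
extension of `σ` can be extended so as to enumerate arbitrarily large numbers, and for every `n`
it can be extended so as to exclude, above some bound, all numbers of one of the two colours `R n`
and `(R n)ᶜ`. That an extension excludes numbers is a `Π⁰₁` condition, so a chain of extensions
excluding the numbers of a colour for `n = 0, 1, 2, …` in turn, together with the colours that
remain, is the limit of a computable approximation. Infinitely many numbers have the remaining
colours for all `k` below any given `n`, hence a computable sequence which follows the
approximation and grows forever has a cohesive range.
-/

section RecursivelyEnumerable

open Encodable

variable {α β : Type*} [Primcodable α] [Primcodable β]

theorem computablePred_eq {f g : α → β} (hf : Computable f) (hg : Computable g) :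
    ComputablePred fun a => f a = g a := by
  classical
  exact ⟨inferInstance, Primrec.eq.decide.to_comp.comp hf hg⟩

theorem computablePred_lt {f g : α → ℕ} (hf : Computable f) (hg : Computable g) :
    ComputablePred fun a => f a < g a :=
  ⟨inferInstance, Primrec.nat_lt.decide.to_comp.comp hf hg⟩

theorem computablePred_comp {p : β → Prop} (hp : ComputablePred p) {f : α → β}
    (hf : Computable f) : ComputablePred fun a => p (f a) := by
  obtain ⟨q, hq, rfl⟩ := ComputablePred.computable_iff.1 hp
  exact ComputablePred.computable_iff.2 ⟨_, hq.comp hf, rfl⟩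

theorem computablePred_forall_lt {p : α × ℕ → Prop} (hp : ComputablePred p) :
    ComputablePred fun x : α × ℕ => ∀ i < x.2, p (x.1, i) := by
  obtain ⟨q, hq, rfl⟩ := ComputablePred.computable_iff.1 hp
  let all (x : α × ℕ) : Bool := Nat.rec (motive := fun _ => Bool) true
    (fun i b => b && q (x.1, i)) x.2
  have hstep : Computable₂ fun (x : α × ℕ) (y : ℕ × Bool) => y.2 && q (x.1, y.1) :=
    Primrec.and.to_comp.comp (Computable.snd.comp .snd)
      (hq.comp ((Computable.fst.comp .fst).pair (Computable.fst.comp .snd)))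
  have hall : Computable all := Computable.nat_rec .snd (.const true) hstep
  have hspec : ∀ a n, all (a, n) = true ↔ ∀ i < n, q (a, i) = true := fun a n => by
    induction n with
    | zero => simp [all]
    | succ n ih =>
      rw [show all (a, n + 1) = (all (a, n) && q (a, n)) from rfl, Bool.and_eq_true, ih,
        Nat.forall_lt_succ_right]
  exact (computablePred_eq hall (.const true)).of_eq fun x => hspec x.1 x.2

theorem computableSet_range_of_strictMono {u : ℕ → ℕ} (hu : Computable u) (hmono : StrictMono u) :
    ComputableSet (Set.range u) := by
  have hex : ∀ x, ∃ s, ¬ u s < x := fun x => ⟨x, hmono.le_apply.not_gt⟩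
  have hfind : Computable fun x => Nat.find (hex x) :=
    Computable.find (computablePred_lt (hu.comp .snd) .fst).not hex
  refine ⟨fun x => decide (u (Nat.find (hex x)) = x),
    (computablePred_eq (hu.comp hfind) .id).decide, fun x => ?_⟩
  rw [decide_eq_true_iff]
  refine ⟨?_, fun h => ⟨_, h⟩⟩
  rintro ⟨s, rfl⟩
  congr 1
  exact (Nat.find_eq_iff _).2 ⟨lt_irrefl _, fun t ht h => h (hmono ht)⟩

theorem rePred_comp {p : β → Prop} (hp : REPred p) {f : α → β} (hf : Computable f) :
    REPred fun a => p (f a) :=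
  Partrec.comp hp hf

theorem rePred_and {p q : α → Prop} (hp : REPred p) (hq : REPred q) :
    REPred fun a => p a ∧ q a := by
  have hq' : Partrec₂ fun (a : α) (_ : Unit) => Part.assert (q a) fun _ => Part.some () :=
    Partrec.comp hq .fst
  exact (Partrec.bind hp hq').of_eq fun a => by
    ext
    simp

theorem rePred_true_mem {f : α →. Bool} (hf : Partrec f) : REPred fun a => true ∈ f a := by
  have hcond : Partrec₂ fun (_ : α) (b : Bool) => cond b (Part.some ()) Part.none :=
    Partrec.cond Computable.snd (Computable.const ()).partrec Partrec.none
  refine (hf.bind hcond).dom_re.of_eq fun a => ?_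
  simp [Part.dom_iff_mem]

theorem rePred_exists_nat {p : α × ℕ → Prop} (hp : ComputablePred p) :
    REPred fun a => ∃ n, p (a, n) := by
  obtain ⟨q, hq, rfl⟩ := ComputablePred.computable_iff.1 hp
  have hsearch : Partrec fun a => Nat.rfind fun n => Part.some (q (a, n)) :=
    Partrec.rfind hq.partrec
  exact hsearch.dom_re.of_eq fun a => Nat.rfind_dom'.trans (by simp)

theorem exists_monotone_stages {p : α → Prop} (hp : REPred p) :
    ∃ q : α → ℕ → Bool, Computable₂ q ∧ (∀ a, Monotone (q a)) ∧ ∀ a, p a ↔ ∃ s, q a s := by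
  obtain ⟨c, hc⟩ := Nat.Partrec.Code.exists_code.1 hp
  refine ⟨fun a s => (c.evaln s (encode a)).isSome, ?_, fun a s t hst h => ?_, fun a => ?_⟩
  · exact (Primrec.option_isSome.comp (Nat.Partrec.Code.primrec_evaln.comp
      ((Primrec.snd.pair (Primrec.const c)).pair (Primrec.encode.comp Primrec.fst)))).to_comp
  · obtain ⟨x, hx⟩ := Option.isSome_iff_exists.1 h
    exact Option.isSome_iff_exists.2 ⟨x, Nat.Partrec.Code.evaln_mono hst hx⟩
  · have hdom : p a ↔ (c.eval (encode a)).Dom := by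
      simp [hc, Part.assert]
    simp only [hdom, Part.dom_iff_mem, Nat.Partrec.Code.evaln_complete, Option.isSome_iff_exists,
      Option.mem_def]
    exact exists_comm

theorem exists_computable_surjective (β : Type*) [Primcodable β] [Nonempty β] :
    ∃ e : ℕ → β, Computable e ∧ Function.Surjective e := by
  obtain ⟨d⟩ := ‹Nonempty β›
  exact ⟨fun n => (decode n).getD d, Computable.decode.option_getD (Computable.const d),
    fun b => ⟨encode b, by simp⟩⟩

theorem exists_computable_enumeration [Nonempty β] {p : α × β → Prop} (hp : REPred p) :
    ∃ (q : α × ℕ → Prop) (e : ℕ → β), ComputablePred q ∧ Computable e ∧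
      ∀ a b, p (a, b) ↔ ∃ n, q (a, n) ∧ e n = b := by
  obtain ⟨q, hq, -, hpq⟩ := exists_monotone_stages hp
  obtain ⟨e, he, hsurj⟩ := exists_computable_surjective (β × ℕ)
  refine ⟨fun x => q (x.1, (e x.2).1) (e x.2).2 = true, fun n => (e n).1,
    ?_, Computable.fst.comp he, fun a b => ?_⟩
  · have hen : Computable fun x : α × ℕ => e x.2 := he.comp .snd
    exact computablePred_eq (hq.comp (.pair .fst (Computable.fst.comp hen))
      (Computable.snd.comp hen)) (.const true)
  · rw [hpq, ← hsurj.exists (p := fun x : β × ℕ => q (a, x.1) x.2 = true ∧ x.1 = b)]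
    aesop

theorem rePred_exists [Nonempty β] {p : α × β → Prop} (hp : REPred p) :
    REPred fun a => ∃ b, p (a, b) := by
  obtain ⟨q, e, hq, -, hpq⟩ := exists_computable_enumeration hp
  exact (rePred_exists_nat hq).of_eq fun a => by simp [hpq]

theorem exists_computable_choice [Nonempty β] {p : α × β → Prop} (hp : REPred p)
    (h : ∀ a, ∃ b, p (a, b)) : ∃ g : α → β, Computable g ∧ ∀ a, p (a, g a) := by
  classical
  obtain ⟨q, e, hq, he, hpq⟩ := exists_computable_enumeration hp
  have hex : ∀ a, ∃ n, q (a, n) := fun a => by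
    obtain ⟨b, hb⟩ := h a
    exact ((hpq a b).1 hb).imp fun n hn => hn.1
  exact ⟨fun a => e (Nat.find (hex a)), he.comp (Computable.find hq hex),
    fun a => (hpq a _).2 ⟨_, Nat.find_spec (hex a), rfl⟩⟩

theorem rePred_isPrefix : REPred fun p : List α × List α => p.1 <+: p.2 :=
  rePred_exists (p := fun x : (List α × List α) × List α => x.1.1 ++ x.2 = x.1.2)
    (computablePred_eq (Computable.list_append.comp (Computable.fst.comp .fst) .snd)
      (Computable.snd.comp .fst)).to_re

end RecursivelyEnumerable

theorem sigma3_exists_forall {β γ : Type*} [Primcodable β] [Primcodable γ] [Nonempty β]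
    [Nonempty γ] {p : BinStr × β × γ → Prop} (hp : REPred p) :
    Sigma3 {σ | ∃ b, ∀ c, p (σ, b, c)} := by
  obtain ⟨q, hq, -, hpq⟩ := exists_monotone_stages hp
  obtain ⟨e, he, he_surj⟩ := exists_computable_surjective β
  obtain ⟨d, hd, hd_surj⟩ := exists_computable_surjective γ
  refine ⟨fun σ i j s => q (σ, e i, d j) s, ?_, fun σ => ?_⟩
  · exact hq.comp (.pair .fst (.pair (he.comp (Computable.fst.comp .snd))
      (hd.comp (Computable.fst.comp (Computable.snd.comp .snd)))))
      (Computable.snd.comp (Computable.snd.comp .snd))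
  · simp only [Set.mem_ofPred_eq, hpq, he_surj.exists, hd_surj.forall]

theorem sigma3_exists_not {β : Type*} [Primcodable β] [Nonempty β] {p : BinStr × β → Prop}
    (hp : REPred p) : Sigma3 {σ | ∃ b, ¬ p (σ, b)} := by
  obtain ⟨q, hq, -, hpq⟩ := exists_monotone_stages hp
  have hq' : ComputablePred fun x : BinStr × β × ℕ => q (x.1, x.2.1) x.2.2 = false :=
    computablePred_eq (hq.comp (.pair .fst (Computable.fst.comp .snd))
      (Computable.snd.comp .snd)) (.const false)
  simpa [hpq] using sigma3_exists_forall hq'.to_re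

theorem sigma3_of_rePred {V : Set BinStr} (hV : REPred (· ∈ V)) : Sigma3 V := by
  simpa using sigma3_exists_forall (β := Unit) (γ := Unit) (rePred_comp hV .fst)

theorem IsInitSeg.isPrefix_of_length_le {σ τ : BinStr} {X : ℕ → Bool} (hσ : IsInitSeg σ X)
    (hτ : IsInitSeg τ X) (h : σ.length ≤ τ.length) : σ <+: τ := by
  refine List.prefix_iff_getElem.2 ⟨h, fun i hi => ?_⟩
  rw [← List.getD_eq_getElem _ false hi, ← List.getD_eq_getElem _ false (hi.trans_le h),
    hσ i hi, hτ i (hi.trans_le h)]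

theorem IsInitSeg.exists_common_extension {σ τ : BinStr} {X : ℕ → Bool} (hσ : IsInitSeg σ X)
    (hτ : IsInitSeg τ X) : ∃ ρ, IsInitSeg ρ X ∧ σ <+: ρ ∧ τ <+: ρ := by
  rcases le_total σ.length τ.length with h | h
  · exact ⟨τ, hτ, hσ.isPrefix_of_length_le hτ h, List.prefix_rfl⟩
  · exact ⟨σ, hσ, List.prefix_rfl, hτ.isPrefix_of_length_le hσ h⟩

/-- `X` meets `V`: the open set generated by `V` contains `X`. -/
def Meets (X : ℕ → Bool) (V : Set BinStr) : Prop :=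
  ∃ σ, IsInitSeg σ X ∧ σ ∈ V

/-- The strings that force a set to miss `V`. A `3`-generic meets `V` or `avoiding V` whenever `V`
is `Σ⁰₃`. -/
def avoiding (V : Set BinStr) : Set BinStr :=
  {ρ | ∀ ζ, ρ <+: ζ → ζ ∉ V}

/-- `V` is dense above `σ` in the forcing notion of binary strings, longer strings being
stronger. -/
def DenseAbove (V : Set BinStr) (σ : BinStr) : Prop :=
  ∀ τ, σ <+: τ → ∃ ζ, τ <+: ζ ∧ ζ ∈ V

theorem DenseAbove.mono {V : Set BinStr} {σ τ : BinStr} (hV : DenseAbove V σ) (h : σ <+: τ) :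
    DenseAbove V τ :=
  fun ρ hρ => hV ρ (h.trans hρ)

theorem denseAbove_iff {V : Set BinStr} {σ : BinStr} :
    DenseAbove V σ ↔ ∀ δ, σ ++ δ ∉ avoiding V := by
  simp [DenseAbove, avoiding, List.IsPrefix]

theorem rePred_notMem_avoiding {β : Type*} [Primcodable β] {V : β → Set BinStr}
    (hV : REPred fun p : BinStr × β => p.1 ∈ V p.2) :
    REPred fun p : BinStr × β => p.1 ∉ avoiding (V p.2) := by
  have hext : REPred fun p : BinStr × β => ∃ ζ, p.1 <+: ζ ∧ ζ ∈ V p.2 :=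
    rePred_exists (p := fun x : (BinStr × β) × BinStr => x.1.1 <+: x.2 ∧ x.2 ∈ V x.1.2) <|
      have hfst : Computable fun x : (BinStr × β) × BinStr => (x.1.1, x.2) :=
        (Computable.fst.comp .fst).pair .snd
      have hsnd : Computable fun x : (BinStr × β) × BinStr => (x.2, x.1.2) :=
        Computable.snd.pair (Computable.snd.comp .fst)
      rePred_and (rePred_comp rePred_isPrefix hfst :) (rePred_comp hV hsnd :)
  exact hext.of_eq fun p => by simp [avoiding]

namespace ThreeGeneric

variable {G : ℕ → Bool} {β ι : Type*} [Primcodable β] [Nonempty β] [Primcodable ι] [Nonempty ι]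

theorem meets_of_denseAbove (hG : ThreeGeneric G) {V : Set BinStr} (hV : REPred (· ∈ V))
    {σ : BinStr} (hσ : IsInitSeg σ G) (hdense : DenseAbove V σ) : Meets G V := by
  refine (hG V (sigma3_of_rePred hV)).resolve_right ?_
  rintro ⟨τ, hτ, havoid⟩
  obtain ⟨ρ, -, hσρ, hτρ⟩ := hσ.exists_common_extension hτ
  obtain ⟨ζ, hρζ, hζ⟩ := hdense ρ hσρ
  exact havoid ζ (hτρ.trans hρζ) hζ

theorem exists_forall_denseAbove (hG : ThreeGeneric G) {V : β → Set BinStr}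
    (hV : REPred fun p : BinStr × β => p.1 ∈ V p.2)
    (hupper : ∀ b ⦃σ τ⦄, σ <+: τ → σ ∈ V b → τ ∈ V b) (hmeets : ∀ b, Meets G (V b)) :
    ∃ σ, IsInitSeg σ G ∧ ∀ b, DenseAbove (V b) σ := by
  have hS : Sigma3 {τ | ∃ b, τ ∈ avoiding (V b)} := by
    simpa using sigma3_exists_not (rePred_notMem_avoiding hV)
  rcases hG _ hS with ⟨σ, hσ, b, hb⟩ | ⟨σ, hσ, h⟩
  · obtain ⟨τ, hτ, hτV⟩ := hmeets b
    obtain ⟨ρ, -, hσρ, hτρ⟩ := hσ.exists_common_extension hτ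
    exact absurd (hupper b hτρ hτV) (hb ρ hσρ)
  · refine ⟨σ, hσ, fun b τ hστ => ?_⟩
    by_contra! hno
    exact h τ hστ ⟨b, hno⟩

theorem exists_forall_denseAbove_avoiding (hG : ThreeGeneric G) {V : β → ι → Set BinStr}
    (hV : REPred fun p : BinStr × β × ι => p.1 ∈ V p.2.1 p.2.2)
    (hmiss : ∀ b, ∃ i, ¬ Meets G (V b i)) :
    ∃ σ, IsInitSeg σ G ∧ ∀ b, DenseAbove (⋃ i, avoiding (V b i)) σ := by
  have hS : Sigma3 {τ | ∃ b, ∀ i, DenseAbove (V b i) τ} := by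
    have hext : REPred fun x : BinStr × β × BinStr × ι =>
        x.1 ++ x.2.2.1 ∉ avoiding (V x.2.1 x.2.2.2) :=
      have hbi : Computable fun x : BinStr × β × BinStr × ι => (x.2.1, x.2.2.2) :=
        (Computable.fst.comp .snd).pair (Computable.snd.comp (Computable.snd.comp .snd))
      have hτδ : Computable fun x : BinStr × β × BinStr × ι => x.1 ++ x.2.2.1 :=
        Computable.list_append.comp .fst (Computable.fst.comp (Computable.snd.comp .snd))
      (rePred_comp (rePred_notMem_avoiding (V := fun q : β × ι => V q.1 q.2) hV)
        (hτδ.pair hbi) :)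
    convert sigma3_exists_forall hext using 5 with τ b
    simp only [denseAbove_iff, Prod.forall]
    exact forall_comm
  rcases hG _ hS with ⟨σ, hσ, b, hb⟩ | ⟨σ, hσ, h⟩
  · obtain ⟨i, hi⟩ := hmiss b
    have hVbi : REPred (· ∈ V b i) :=
      rePred_comp hV (Computable.id.pair (.const (b, i)))
    exact absurd (hG.meets_of_denseAbove hVbi hσ (hb i)) hi
  · refine ⟨σ, hσ, fun b τ hστ => ?_⟩
    have hnot : ∃ i, ¬ DenseAbove (V b i) τ := by
      by_contra! hall
      exact h τ hστ ⟨b, hall⟩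
    obtain ⟨i, hi⟩ := hnot
    obtain ⟨δ, hδ⟩ : ∃ δ, τ ++ δ ∈ avoiding (V b i) := by simpa [denseAbove_iff] using hi
    exact ⟨τ ++ δ, List.prefix_append τ δ, Set.mem_iUnion.2 ⟨i, hδ⟩⟩

end ThreeGeneric

section LimitComputable

open Filter

variable {α β γ : Type*} [Primcodable α] [Primcodable β] [Primcodable γ]

/-- `h` is the pointwise limit of a computable sequence of functions; by Shoenfield's limit lemma
these are the functions computable from the halting problem. -/
def LimitComputable (h : α → β) : Prop :=
  ∃ g : α → ℕ → β, Computable₂ g ∧ ∀ a, ∀ᶠ s in atTop, g a s = h a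

namespace LimitComputable

theorem of_computable {h : α → β} (hh : Computable h) : LimitComputable h :=
  ⟨fun a _ => h a, hh.comp .fst, fun _ => .of_forall fun _ => rfl⟩

theorem comp {h : β → γ} {k : α → β} (hh : LimitComputable h) (hk : LimitComputable k) :
    LimitComputable fun a => h (k a) := by
  obtain ⟨g, hg, hgh⟩ := hh
  obtain ⟨l, hl, hlk⟩ := hk
  refine ⟨fun a s => g (l a s) s, hg.comp hl .snd, fun a => ?_⟩
  filter_upwards [hlk a, hgh (k a)] with s hls hgs
  rw [hls, hgs]

theorem pair {h : α → β} {k : α → γ} (hh : LimitComputable h) (hk : LimitComputable k) :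
    LimitComputable fun a => (h a, k a) := by
  obtain ⟨g, hg, hgh⟩ := hh
  obtain ⟨l, hl, hlk⟩ := hk
  refine ⟨fun a s => (g a s, l a s), Computable.pair hg hl, fun a => ?_⟩
  filter_upwards [hgh a, hlk a] with s hgs hls
  rw [hgs, hls]

theorem nat_rec {h : ℕ × α → α} (hh : LimitComputable h) (a₀ : α) :
    LimitComputable fun n => Nat.rec (motive := fun _ => α) a₀ (fun n a => h (n, a)) n := by
  obtain ⟨g, hg, hgh⟩ := hh
  refine ⟨fun n s => Nat.rec (motive := fun _ => α) a₀ (fun n a => g (n, a) s) n,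
    Computable.nat_rec (h := fun (x : ℕ × ℕ) y => g y x.2) .fst (.const a₀)
      (hg.comp .snd (Computable.snd.comp .fst)), fun n => ?_⟩
  induction n with
  | zero => exact .of_forall fun _ => rfl
  | succ n ih =>
    filter_upwards [ih, hgh (n, Nat.rec a₀ (fun n a => h (n, a)) n)] with s hs hgs
    simp only [hs, hgs]

end LimitComputable

/-- The number of guesses `0, 1, 2, …` discarded by stage `s` when the current guess `i` is
discarded as soon as `q i` is seen to hold. -/
def mindChanges (q : ℕ → ℕ → Bool) : ℕ → ℕ :=
  Nat.rec 0 fun s i => bif q i s then i + 1 else i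

theorem mindChanges_succ (q : ℕ → ℕ → Bool) (s : ℕ) :
    mindChanges q (s + 1) =
      bif q (mindChanges q s) s then mindChanges q s + 1 else mindChanges q s :=
  rfl

theorem computable_mindChanges {q : α → ℕ → ℕ → Bool}
    (hq : Computable fun x : α × ℕ × ℕ => q x.1 x.2.1 x.2.2) :
    Computable₂ fun a s => mindChanges (q a) s := by
  have hi : Computable fun z : (α × ℕ) × ℕ × ℕ => z.2.2 := Computable.snd.comp .snd
  have hqi : Computable fun z : (α × ℕ) × ℕ × ℕ => q z.1.1 z.2.2 z.2.1 :=
    (hq.comp ((Computable.fst.comp .fst).pair (hi.pair (Computable.fst.comp .snd))) :)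
  have hstep : Computable₂ fun (x : α × ℕ) (y : ℕ × ℕ) =>
      bif q x.1 y.2 y.1 then y.2 + 1 else y.2 :=
    Computable.cond hqi (Computable.succ.comp hi) hi
  exact Computable.nat_rec (α := α × ℕ) .snd (.const 0) hstep

theorem monotone_mindChanges (q : ℕ → ℕ → Bool) : Monotone (mindChanges q) :=
  monotone_nat_of_le_succ fun s => by
    rw [mindChanges_succ]
    cases q (mindChanges q s) s <;> simp

theorem mindChanges_le {q : ℕ → ℕ → Bool} {j : ℕ} (hj : ∀ s, q j s = false) (s : ℕ) :
    mindChanges q s ≤ j := by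
  induction s with
  | zero => exact Nat.zero_le j
  | succ s ih =>
    rw [mindChanges_succ]
    rcases ih.eq_or_lt with h | h
    · simp [h, hj s]
    · cases q (mindChanges q s) s
      · exact ih
      · exact h

theorem exists_eventually_mindChanges_eq {q : ℕ → ℕ → Bool} (hmono : ∀ i, Monotone (q i))
    (hq : ∃ j, ∀ s, q j s = false) :
    ∃ i, (∀ s, q i s = false) ∧ ∀ᶠ s in atTop, mindChanges q s = i := by
  obtain ⟨j, hj⟩ := hq
  have hbdd : BddAbove (Set.range (mindChanges q)) :=
    ⟨j, Set.forall_mem_range.2 (mindChanges_le hj)⟩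
  have hlim : ∀ᶠ s in atTop, mindChanges q s = ⨆ s, mindChanges q s := by
    simpa [nhds_discrete] using tendsto_atTop_ciSup (monotone_mindChanges q) hbdd
  refine ⟨_, fun s => ?_, hlim⟩
  obtain ⟨N, hN⟩ := eventually_atTop.1 hlim
  by_contra hs
  have hkeep := hN (max N s) (le_max_left N s)
  have hdiscard : q (mindChanges q (max N s)) (max N s) = true := by
    rw [hkeep]
    exact hmono _ (le_max_right N s) (Bool.not_eq_false _ ▸ hs)
  have hchange := hN (max N s + 1) (by omega)
  rw [mindChanges_succ, hdiscard, cond_true, hkeep] at hchange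
  omega

theorem exists_limitComputable_choice [Nonempty β] {p : α × β → Prop}
    (hp : REPred fun x => ¬ p x) (h : ∀ a, ∃ b, p (a, b)) :
    ∃ g : α → β, LimitComputable g ∧ ∀ a, p (a, g a) := by
  obtain ⟨q, hq, hmono, hpq⟩ := exists_monotone_stages hp
  obtain ⟨e, he, hsurj⟩ := exists_computable_surjective β
  have hpq' : ∀ a i, p (a, e i) ↔ ∀ s, q (a, e i) s = false := fun a i => by
    simpa using (hpq (a, e i)).not
  have hlim : ∀ a, ∃ i, p (a, e i) ∧ ∀ᶠ s in atTop, mindChanges (fun i => q (a, e i)) s = i :=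
    fun a => by
      simp only [hpq']
      refine exists_eventually_mindChanges_eq (fun i => hmono _) ?_
      simpa only [hpq', hsurj.exists] using h a
  choose i hi hconv using hlim
  refine ⟨fun a => e (i a), ⟨fun a s => e (mindChanges (fun i => q (a, e i)) s), ?_, ?_⟩, hi⟩
  · refine he.comp (computable_mindChanges (q := fun a i => q (a, e i)) ?_)
    exact hq.comp (.pair .fst (he.comp (Computable.fst.comp .snd)))
      (Computable.snd.comp .snd)
  · exact fun a => (hconv a).mono fun s hs => congrArg e hs

end LimitComputable

section Cohesive

open Filter

variable {R : ℕ → Set ℕ} {f : ℕ → ℕ → Bool} {b : ℕ → Bool}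

theorem subsetStar_range_of_eventually {u : ℕ → ℕ} {B : Set ℕ} (h : ∀ᶠ s in atTop, u s ∈ B) :
    SubsetStar (Set.range u) B := by
  rw [← Nat.cofinite_eq_atTop, eventually_cofinite] at h
  refine (h.image u).subset ?_
  rintro _ ⟨⟨s, rfl⟩, hs⟩
  exact ⟨s, hs, rfl⟩

theorem cohesive_range {u : ℕ → ℕ} (hu : StrictMono u)
    (h : ∀ n, (∀ᶠ s in atTop, u s ∈ R n) ∨ ∀ᶠ s in atTop, u s ∈ (R n)ᶜ) :
    Cohesive R (Set.range u) :=
  ⟨Set.infinite_range_of_injective hu.injective, fun n =>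
    (h n).imp subsetStar_range_of_eventually subsetStar_range_of_eventually⟩

theorem exists_computable_strictMono_eventually_eq (hf : Computable₂ f) (hb : LimitComputable b)
    (hinf : ∀ n, {u | ∀ i < n, f i u = b i}.Infinite) :
    ∃ u : ℕ → ℕ, Computable u ∧ StrictMono u ∧ ∀ n, ∀ᶠ s in atTop, f n (u s) = b n := by
  obtain ⟨c, hc, hcb⟩ := hb
  have hnext_re : REPred fun x : (ℕ × ℕ) × ℕ =>
      x.1.2 < x.2 ∧ ∃ r, ∀ i < x.1.1, f i x.2 = c i (x.1.1 + r) := by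
    have hagree : ComputablePred fun x : (ℕ × ℕ) × ℕ => f x.2 x.1.1 = c x.2 x.1.2 :=
      computablePred_eq (hf.comp .snd (Computable.fst.comp .fst))
        (hc.comp .snd (Computable.snd.comp .fst))
    have hs : Computable fun x : ((ℕ × ℕ) × ℕ) × ℕ => x.1.1.1 :=
      Computable.fst.comp (Computable.fst.comp .fst)
    exact rePred_and (computablePred_lt (Computable.snd.comp .fst) .snd).to_re <|
      rePred_exists_nat <| computablePred_comp (computablePred_forall_lt hagree) <|
        ((Computable.snd.comp .fst).pair (Primrec.nat_add.to_comp.comp hs .snd)).pair hs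
  have hnext : ∀ x : ℕ × ℕ, ∃ w, x.2 < w ∧ ∃ r, ∀ i < x.1, f i w = c i (x.1 + r) := by
    rintro ⟨s, v⟩
    obtain ⟨w, hw, hvw⟩ := (hinf s).exists_gt v
    have hlim : ∀ᶠ t in atTop, ∀ i < s, c i t = b i :=
      (eventually_all_finite (Set.finite_lt_nat s)).2 fun i _ => hcb i
    obtain ⟨t, hst, ht⟩ := ((eventually_ge_atTop s).and hlim).exists
    obtain ⟨r, rfl⟩ := Nat.exists_eq_add_of_le hst
    exact ⟨w, hvw, r, fun i hi => (hw i hi).trans (ht i hi).symm⟩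
  obtain ⟨g, hg, hgnext⟩ := exists_computable_choice hnext_re hnext
  let u : ℕ → ℕ := Nat.rec 0 fun s v => g (s, v)
  refine ⟨u, Computable.nat_rec .id (.const 0) (hg.comp .snd),
    strictMono_nat_of_lt_succ fun s => (hgnext (s, u s)).1, fun n => ?_⟩
  obtain ⟨N, hN⟩ := eventually_atTop.1 (hcb n)
  rw [← map_add_atTop_eq_nat 1, eventually_map]
  filter_upwards [eventually_gt_atTop n, eventually_ge_atTop N] with s hns hNs
  obtain ⟨r, hr⟩ := (hgnext (s, u s)).2
  exact (hr n hns).trans (hN _ (hNs.trans (Nat.le_add_right s r)))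

theorem exists_computable_cohesive (hf : Computable₂ f) (hfR : ∀ n x, x ∈ R n ↔ f n x = true)
    (hb : LimitComputable b) (hinf : ∀ n, {u | ∀ i < n, f i u = b i}.Infinite) :
    ∃ C, ComputableSet C ∧ Cohesive R C := by
  obtain ⟨u, hu, hmono, hlim⟩ := exists_computable_strictMono_eventually_eq hf hb hinf
  refine ⟨_, computableSet_range_of_strictMono hu hmono, cohesive_range hmono fun n => ?_⟩
  simp only [Set.mem_compl_iff, hfR, Bool.not_eq_true]
  cases hbn : b n
  · exact .inr (hbn ▸ hlim n)
  · exact .inl (hbn ▸ hlim n)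

end Cohesive

/-- The strings from which the axioms `W` enumerate an element of `B`; an axiom `(ζ, u)` enumerates
`u` from `ζ`. -/
def hits (W : Set (BinStr × ℕ)) (B : Set ℕ) : Set BinStr :=
  {ζ | ∃ u ∈ B, (ζ, u) ∈ W}

/-- The numbers above `i.1` that refute the guess that the `n`-th colour is eventually `i.2`. -/
def disagreement (f : ℕ → ℕ → Bool) (n : ℕ) (i : ℕ × Bool) : Set ℕ :=
  {u | i.1 < u ∧ f n u ≠ i.2}

theorem Cohesive.exists_disjoint_disagreement {R : ℕ → Set ℕ} {C : Set ℕ} (hC : Cohesive R C)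
    {f : ℕ → ℕ → Bool} (hfR : ∀ n x, x ∈ R n ↔ f n x = true) (n : ℕ) :
    ∃ i, Disjoint C (disagreement f n i) := by
  have hbound : ∀ {B : Set ℕ}, SubsetStar C B → ∃ x, ∀ u ∈ C, x < u → u ∈ B := fun h => by
    obtain ⟨x, hx⟩ := h.bddAbove
    exact ⟨x, fun u hu hxu => by_contra fun hB => hxu.not_ge (hx ⟨hu, hB⟩)⟩
  simp only [Set.disjoint_left, disagreement, Set.mem_ofPred_eq, not_and, not_not]
  rcases hC.2 n with h | h
  · obtain ⟨x, hx⟩ := hbound h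
    exact ⟨(x, true), fun u hu hxu => (hfR n u).1 (hx u hu hxu)⟩
  · obtain ⟨x, hx⟩ := hbound h
    exact ⟨(x, false), fun u hu hxu => Bool.eq_false_iff.2 (mt (hfR n u).2 (hx u hu hxu))⟩

section Hits

variable {W : Set (BinStr × ℕ)} {f : ℕ → ℕ → Bool}

theorem meets_hits {C : Set ℕ} {X : ℕ → Bool}
    (hC : ∀ x, x ∈ C ↔ ∃ σ, IsInitSeg σ X ∧ (σ, x) ∈ W) (B : Set ℕ) :
    Meets X (hits W B) ↔ ∃ x ∈ C, x ∈ B := by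
  simp only [Meets, hits, Set.mem_ofPred_eq, hC]
  grind

theorem rePred_hits {α : Type*} [Primcodable α] (hW : REPred (· ∈ W)) {B : α → Set ℕ}
    (hB : REPred fun p : α × ℕ => p.2 ∈ B p.1) :
    REPred fun p : BinStr × α => p.1 ∈ hits W (B p.2) :=
  rePred_exists (p := fun x : (BinStr × α) × ℕ => x.2 ∈ B x.1.2 ∧ (x.1.1, x.2) ∈ W) <|
    rePred_and (rePred_comp hB ((Computable.snd.comp .fst).pair .snd))
      (rePred_comp hW ((Computable.fst.comp .fst).pair .snd))

theorem rePred_hits_disagreement (hW : REPred (· ∈ W)) (hf : Computable₂ f) :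
    REPred fun p : BinStr × ℕ × ℕ × Bool => p.1 ∈ hits W (disagreement f p.2.1 p.2.2) := by
  refine rePred_hits (B := fun p : ℕ × ℕ × Bool => disagreement f p.1 p.2) hW ?_
  have hi : Computable fun p : (ℕ × ℕ × Bool) × ℕ => p.1.2 := Computable.snd.comp .fst
  exact rePred_and (computablePred_lt (Computable.fst.comp hi) .snd).to_re
    (computablePred_eq (hf.comp (Computable.fst.comp .fst) .snd) (Computable.snd.comp hi)).not.to_re

theorem infinite_agreement_of_chain {σ : BinStr}
    (hunbounded : ∀ x, DenseAbove (hits W (Set.Ioi x)) σ)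
    {ρ : ℕ → BinStr} (hρ₀ : σ <+: ρ 0) (hρ : ∀ n, ρ n <+: ρ (n + 1)) {i : ℕ → ℕ × Bool}
    (havoid : ∀ n, ρ (n + 1) ∈ avoiding (hits W (disagreement f n (i n)))) (n : ℕ) :
    {u | ∀ k < n, f k u = (i k).2}.Infinite := by
  have hchain : ∀ ⦃k l⦄, k ≤ l → ρ k <+: ρ l :=
    Nat.rel_of_forall_rel_succ_of_le (· <+: ·) hρ
  refine Set.infinite_of_forall_exists_gt fun y => ?_
  let bound := max y ((Finset.range n).sup fun k => (i k).1)
  obtain ⟨ζ, hζ, u, hu, hζu⟩ := hunbounded bound (ρ n) (hρ₀.trans (hchain n.zero_le))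
  obtain ⟨hyu, hiu⟩ := max_lt_iff.1 (Set.mem_Ioi.1 hu)
  refine ⟨u, fun k hk => by_contra fun hne => ?_, hyu⟩
  have hku : (i k).1 < u :=
    (Finset.le_sup (f := fun k => (i k).1) (Finset.mem_range.2 hk)).trans_lt hiu
  exact havoid k ζ ((hchain hk).trans hζ) ⟨u, ⟨hku, hne⟩, hζu⟩

theorem exists_limitComputable_infinite_agreement (hf : Computable₂ f) (hW : REPred (· ∈ W))
    {σ : BinStr} (hunbounded : ∀ x, DenseAbove (hits W (Set.Ioi x)) σ)
    (hdecided : ∀ n, DenseAbove (⋃ i, avoiding (hits W (disagreement f n i))) σ) :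
    ∃ b : ℕ → Bool, LimitComputable b ∧ ∀ n, {u | ∀ k < n, f k u = b k}.Infinite := by
  have hre : REPred fun x : (ℕ × BinStr) × BinStr × ℕ × Bool =>
      (σ ++ x.1.2) ++ x.2.1 ∉ avoiding (hits W (disagreement f x.1.1 x.2.2)) := by
    have hδ : Computable fun x : (ℕ × BinStr) × BinStr × ℕ × Bool => σ ++ x.1.2 ++ x.2.1 :=
      Computable.list_append.comp
        (Computable.list_append.comp (.const σ) (Computable.snd.comp .fst))
        (Computable.fst.comp .snd)
    have hni : Computable fun x : (ℕ × BinStr) × BinStr × ℕ × Bool => (x.1.1, x.2.2) :=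
      (Computable.fst.comp .fst).pair (Computable.snd.comp .snd)
    exact (rePred_comp (rePred_notMem_avoiding (V := fun p : ℕ × ℕ × Bool =>
      hits W (disagreement f p.1 p.2)) (rePred_hits_disagreement hW hf)) (hδ.pair hni) :)
  have hex : ∀ a : ℕ × BinStr, ∃ d : BinStr × ℕ × Bool,
      (σ ++ a.2) ++ d.1 ∈ avoiding (hits W (disagreement f a.1 d.2)) := by
    rintro ⟨n, δ⟩
    obtain ⟨_, ⟨η, rfl⟩, hη⟩ := hdecided n (σ ++ δ) (List.prefix_append σ δ)
    obtain ⟨i, hi⟩ := Set.mem_iUnion.1 hη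
    exact ⟨(η, i), hi⟩
  obtain ⟨g, hg, hgavoid⟩ := exists_limitComputable_choice hre hex
  let δ : ℕ → BinStr := Nat.rec [] fun n δ => δ ++ (g (n, δ)).1
  have hδ : LimitComputable δ :=
    LimitComputable.nat_rec (h := fun a : ℕ × BinStr => a.2 ++ (g a).1)
      ((LimitComputable.of_computable Computable.list_append).comp
        ((LimitComputable.of_computable .snd).pair
          ((LimitComputable.of_computable .fst).comp hg))) []
  have hgδ : LimitComputable fun n => g (n, δ n) :=
    hg.comp ((LimitComputable.of_computable .id).pair hδ)
  refine ⟨fun n => (g (n, δ n)).2.2,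
    (LimitComputable.of_computable (Computable.snd.comp .snd)).comp hgδ,
    infinite_agreement_of_chain (ρ := fun n => σ ++ δ n) (i := fun n => (g (n, δ n)).2)
      hunbounded (List.prefix_append σ _) (fun n => ?_) (fun n => ?_)⟩
  · exact (List.prefix_append_right_inj σ).2 (List.prefix_append (δ n) _)
  · simpa only [List.append_assoc] using hgavoid (n, δ n)

end Hits

/-- `C` is computably enumerable in `X`. An axiom `(σ, x) ∈ W` puts `x` into `C` if `σ` is an
initial segment of `X`; asking `W` to be closed under extensions of `σ` is harmless, as the closure
of a c.e. set of axioms is c.e. -/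
def CEIn (C : Set ℕ) (X : ℕ → Bool) : Prop :=
  ∃ W : Set (BinStr × ℕ), REPred (· ∈ W) ∧
    (∀ ⦃σ τ : BinStr⦄, σ <+: τ → ∀ x, (σ, x) ∈ W → (τ, x) ∈ W) ∧
    ∀ x, x ∈ C ↔ ∃ σ, IsInitSeg σ X ∧ (σ, x) ∈ W

theorem ReducibleToFun.ceIn {C : Set ℕ} {X : ℕ → Bool} (h : ReducibleToFun C X) : CEIn C X := by
  obtain ⟨Ψ, hΨ, hmono, htotal, hcorrect⟩ := h
  refine ⟨{p | true ∈ Ψ p}, rePred_true_mem hΨ, fun σ τ hστ x => hmono hστ x true,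
    fun x => ⟨fun hx => ?_, fun ⟨σ, hσ, hx⟩ => (hcorrect σ x true hσ hx).1 rfl⟩⟩
  obtain ⟨σ, hσ, hdom⟩ := htotal x
  obtain ⟨b, hb⟩ := Part.dom_iff_mem.1 hdom
  obtain rfl : b = true := (hcorrect σ x b hσ hb).2 hx
  exact ⟨σ, hσ, hb⟩

theorem no_three_generic_computes_cohesive_general
    (R : ℕ → Set ℕ) (hR : ComputableSeq R)
    (hno : ¬ ∃ C : Set ℕ, ComputableSet C ∧ Cohesive R C) :
    ∀ G : ℕ → Bool, ThreeGeneric G → ∀ C : Set ℕ, CEIn C G → ¬ Cohesive R C := by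
  rintro G hG C ⟨W, hW, hmono, hC⟩ hcoh
  obtain ⟨f, hf, hfR⟩ := hR
  obtain ⟨σ₁, hσ₁, hunbounded⟩ : ∃ σ, IsInitSeg σ G ∧ ∀ x, DenseAbove (hits W (Set.Ioi x)) σ :=
    hG.exists_forall_denseAbove (rePred_hits hW (computablePred_lt .fst .snd).to_re)
      (fun x σ τ hστ ⟨u, hu, hσu⟩ => ⟨u, hu, hmono hστ u hσu⟩)
      fun x => (meets_hits hC _).2 (hcoh.1.exists_gt x)
  have hmiss : ∀ n, ∃ i, ¬ Meets G (hits W (disagreement f n i)) := fun n =>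
    (hcoh.exists_disjoint_disagreement hfR n).imp fun i hi hmeets =>
      Set.not_disjoint_iff.2 ((meets_hits hC _).1 hmeets) hi
  obtain ⟨σ₂, hσ₂, hdecided⟩ :=
    hG.exists_forall_denseAbove_avoiding (rePred_hits_disagreement hW hf) hmiss
  obtain ⟨σ, -, h₁, h₂⟩ := hσ₁.exists_common_extension hσ₂
  obtain ⟨b, hb, hinf⟩ := exists_limitComputable_infinite_agreement hf hW
    (fun x => (hunbounded x).mono h₁) (fun n => (hdecided n).mono h₂)
  exact hno (exists_computable_cohesive hf hfR hb hinf)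

/-- **Theorem (Wang, Theorem 2.1 restated via reductions).** If `R` is a computable
sequence of subsets of `ℕ` admitting no computable `R`-cohesive set, then no set
computable from a `3`-generic is `R`-cohesive. -/
theorem no_three_generic_computes_cohesive
    (R : ℕ → Set ℕ) (hR : ComputableSeq R)
    (hno : ¬ ∃ C : Set ℕ, ComputableSet C ∧ Cohesive R C) :
    ∀ G : ℕ → Bool, ThreeGeneric G →
      ∀ C : Set ℕ, ReducibleToFun C G → ¬ Cohesive R C :=
  fun G hG C hC => no_three_generic_computes_cohesive_general R hR hno G hG C hC.ceIn
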